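/- Let n, m ≥ 1, and let Ψ : ℤ^n \ {0} → ℝ_{≥0} be any function. Let y = a/b ∈ ℚ^m with a ∈ ℤ^m, b ∈ ℕ, gcd(a,b) = 1. Let 𝒜 be the set of x ∈ [0,1)^{nm} such that |qx - p - y| < Ψ(q) for infinitely many (q,p) ∈ (ℤ^n\{0}) × ℤ^m. Then the Lebesgue measure of 𝒜 is either 0 or 1. -/

import Mathlib

open MeasureTheory Set

/-!
Write `y = a / b` and let `W(ψ)` be the set of real matrices `x` such that, for infinitely many
`q ≠ 0`, every coordinate of `q x - p - y` has absolute value less than `ψ q` for some integer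
vector `p`.

Truncation. For fixed `q` only finitely many `p` can occur, and once `Ψ q > 1` some `p` always
occurs (round to a nearest integer). Hence the set in the theorem is the part of `W(ψ)` in the unit
cube, with `ψ = min Ψ 1` (`infinite_iff_mem_limsupSet`).

Scale invariance. In the sup norm the `q`-th approximation set is exactly the open neighbourhood of
radius `ψ q / ‖q‖₁` of the union of affine subspaces `q x ∈ y + ℤ^m`
(`approxSet_eq_thickening`). As `ψ ≤ 1`, these radii tend to zero, so Cassels' lemma on limsup sets
of neighbourhoods (in Mathlib: `blimsup_thickening_mul_ae_eq`) shows that `W(M ψ)` and `W(ψ)` agree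
up to a null set for every `M > 0` (`limsupSet_mul_ae_eq`).

Ergodicity. Put `N = b + 1`. Since `N y = y + a`, multiplication by `N` maps `W(ψ)` into `W(N ψ)`
(`mem_limsupSet_mul`). Therefore `A = ⋃ k, W(N ^ k ψ)`, which is almost everywhere equal to `W(ψ)`,
is forward invariant under `x ↦ N x`. It is also `ℤ`-periodic, so it comes from a subset of the
torus `(ℝ/ℤ)^(n m)`, on which multiplication by `N` is ergodic because the `N`-power torsion points
are dense (`ergodic_nsmul_torus`). So `A` has measure zero or one in the unit cube
(`zero_one_of_invariant`).
-/

namespace RationalZeroOne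

open Filter Topology

/-- The matrices `x` for which `q x` lies within `ψ q`, in the sup norm, of some point of
`y + ℤ^m`. -/
def approxSet {n m : ℕ} (y : Fin m → ℝ) (ψ : (Fin n → ℤ) → ℝ) (q : Fin n → ℤ) :
    Set (Fin n → Fin m → ℝ) :=
  {x | ∃ p : Fin m → ℤ, ∀ j, |(∑ i, (q i : ℝ) * x i j) - p j - y j| < ψ q}

/-- The matrices `x` lying in `approxSet y ψ q` for infinitely many `q ≠ 0`, with no restriction to
the unit cube. Infinitude is counted in `q` alone rather than in pairs `(q, p)`. -/
def limsupSet {n m : ℕ} (y : Fin m → ℝ) (ψ : (Fin n → ℤ) → ℝ) : Set (Fin n → Fin m → ℝ) :=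
  {x | {q : Fin n → ℤ | q ≠ 0 ∧ x ∈ approxSet y ψ q}.Infinite}

/-- The matrices `x` with `q x ∈ y + ℤ^m`: a locally finite union of parallel affine subspaces when
`q ≠ 0`. -/
def resonantSet {n m : ℕ} (y : Fin m → ℝ) (q : Fin n → ℤ) : Set (Fin n → Fin m → ℝ) :=
  {x | ∃ p : Fin m → ℤ, ∀ j, (∑ i, (q i : ℝ) * x i j) = p j + y j}

/-- The `ℓ¹` norm of an integer vector. It is the dual norm of the sup norm on `ℝ^n`, hence the
factor relating the size of `q x - p - y` to the sup-norm distance from `x` to `resonantSet y q`. -/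
def l1 {n : ℕ} (q : Fin n → ℤ) : ℝ := ∑ i, |(q i : ℝ)|

lemma l1_pos {n : ℕ} {q : Fin n → ℤ} (hq : q ≠ 0) : 0 < l1 q := by
  obtain ⟨i, hi⟩ := Function.ne_iff.1 hq
  exact Finset.sum_pos' (fun _ _ => abs_nonneg _)
    ⟨i, Finset.mem_univ _, abs_pos.2 (Int.cast_ne_zero.2 hi)⟩

lemma tendsto_l1 {n : ℕ} : Tendsto (l1 (n := n)) cofinite atTop := by
  refine tendsto_atTop.2 fun C => ?_
  have : {q : Fin n → ℤ | l1 q < C} ⊆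
      Set.pi univ fun _ : Fin n => Set.Icc (-⌈C⌉) ⌈C⌉ := by
    intro q hq i _
    have h1 : |(q i : ℝ)| ≤ l1 q :=
      Finset.single_le_sum (f := fun i => |(q i : ℝ)|) (fun _ _ => abs_nonneg _)
        (Finset.mem_univ i)
    have h2 : |(q i : ℝ)| ≤ ⌈C⌉ := (h1.trans (le_of_lt hq)).trans (Int.le_ceil C)
    have h3 : |q i| ≤ ⌈C⌉ := by exact_mod_cast h2
    exact abs_le.1 h3
  have hf := (Set.Finite.pi fun _ : Fin n => Set.finite_Icc (-⌈C⌉) ⌈C⌉).subset this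
  filter_upwards [hf.compl_mem_cofinite] with q hq
  exact not_lt.1 hq

/-- A neighbourhood of radius `ψ q` around `y + ℤ^m`, pulled back under `x ↦ q x`, is a neighbourhood
of radius `ψ q / ‖q‖₁`, because the sup-norm distance from a vector `v` to the hyperplane
`q · v = c` is `|q · v - c| / ‖q‖₁`. -/
lemma approxSet_eq_thickening {n m : ℕ} (hm : 1 ≤ m) (y : Fin m → ℝ) (ψ : (Fin n → ℤ) → ℝ)
    {q : Fin n → ℤ} (hq : q ≠ 0) :
    approxSet y ψ q = Metric.thickening (ψ q / l1 q) (resonantSet (m := m) y q) := by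
  have hl := l1_pos hq
  ext x
  rw [Metric.mem_thickening_iff]
  constructor
  · rintro ⟨p, hp⟩
    have hψ : 0 < ψ q := (abs_nonneg _).trans_lt (hp ⟨0, hm⟩)
    have hr : 0 < ψ q / l1 q := div_pos hψ hl
    -- The nearest point moves every coordinate by the same amount `d / ‖q‖₁`, with the sign of `q i`.
    refine ⟨fun i j => x i j -
      SignType.sign (q i : ℝ) * (((∑ i, (q i : ℝ) * x i j) - p j - y j) / l1 q), ⟨p, fun j => ?_⟩, ?_⟩
    · have h1 : ∀ d : ℝ, ∑ i, (q i : ℝ) * (SignType.sign (q i : ℝ) * (d / l1 q)) = d := by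
        intro d
        have : ∀ i, (q i : ℝ) * (SignType.sign (q i : ℝ) * (d / l1 q)) =
            |(q i : ℝ)| * (d / l1 q) := fun i => by
          rw [← mul_assoc, self_mul_sign]
        simp_rw [this]
        rw [← Finset.sum_mul]
        exact mul_div_cancel₀ d hl.ne'
      simp_rw [mul_sub, Finset.sum_sub_distrib]
      rw [h1]
      ring
    · rw [dist_pi_lt_iff hr]
      intro i
      rw [dist_pi_lt_iff hr]
      intro j
      rw [Real.dist_eq, sub_sub_cancel, abs_mul, abs_div, abs_of_pos hl]
      have hs : |((SignType.sign (q i : ℝ) : SignType) : ℝ)| ≤ 1 := by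
        rcases SignType.sign (q i : ℝ) <;> simp
      refine (mul_le_of_le_one_left (by positivity) hs).trans_lt ?_
      exact div_lt_div_of_pos_right (hp j) hl
  · rintro ⟨z, ⟨p, hp⟩, hz⟩
    rw [lt_div_iff₀ hl] at hz
    refine ⟨p, fun j => lt_of_le_of_lt ?_ hz⟩
    have : (∑ i, (q i : ℝ) * x i j) - p j - y j = ∑ i, (q i : ℝ) * (x i j - z i j) := by
      simp_rw [mul_sub, Finset.sum_sub_distrib]
      rw [hp j]; ring
    rw [this, mul_comm, l1, Finset.sum_mul]
    refine (Finset.abs_sum_le_sum_abs _ _).trans (Finset.sum_le_sum fun i _ => ?_)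
    rw [abs_mul, ← Real.dist_eq]
    gcongr
    exact (dist_le_pi_dist (x i) (z i) j).trans (dist_le_pi_dist x z i)

lemma limsupSet_eq_blimsup {n m : ℕ} (hm : 1 ≤ m) (y : Fin m → ℝ) (ψ : (Fin n → ℤ) → ℝ)
    (e : ℕ ≃ (Fin n → ℤ)) :
    limsupSet y ψ = (blimsup (fun i => Metric.thickening (ψ (e i) / l1 (e i))
      (resonantSet (m := m) y (e i))) atTop (fun i => e i ≠ 0) : Set _) := by
  rw [← Nat.cofinite_eq_atTop, cofinite.blimsup_set_eq]
  ext x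
  rw [limsupSet, mem_ofPred, mem_ofPred, ← Set.infinite_image_iff (f := e) e.injective.injOn]
  have : {q : Fin n → ℤ | q ≠ 0 ∧ x ∈ approxSet y ψ q} = e '' {i | e i ≠ 0 ∧
      x ∈ Metric.thickening (ψ (e i) / l1 (e i)) (resonantSet (m := m) y (e i))} := by
    ext q
    obtain ⟨i, rfl⟩ := e.surjective q
    rw [e.injective.mem_set_image]
    refine and_congr_right fun h => ?_
    rw [approxSet_eq_thickening hm y ψ h]
  rw [this]

lemma measurableSet_limsupSet {n m : ℕ} (hm : 1 ≤ m) (y : Fin m → ℝ) (ψ : (Fin n → ℤ) → ℝ)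
    (e : ℕ ≃ (Fin n → ℤ)) : MeasurableSet (limsupSet y ψ) := by
  rw [limsupSet_eq_blimsup hm y ψ e]
  exact MeasurableSet.measurableSet_blimsup fun i _ => Metric.isOpen_thickening.measurableSet

/-- Cassels' lemma: rescaling `ψ` by a positive constant changes the limsup set only by a null set.
The bound `ψ ≤ 1` makes the radii `ψ q / ‖q‖₁` tend to zero. -/
lemma limsupSet_mul_ae_eq {n m : ℕ} (hm : 1 ≤ m) (y : Fin m → ℝ) (ψ : (Fin n → ℤ) → ℝ)
    (h0 : ∀ q, 0 ≤ ψ q) (h1 : ∀ q, ψ q ≤ 1) (e : ℕ ≃ (Fin n → ℤ)) {M : ℝ} (hM : 0 < M) :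
    limsupSet y (fun q => M * ψ q) =ᵐ[volume] limsupSet y ψ := by
  rw [limsupSet_eq_blimsup hm y _ e, limsupSet_eq_blimsup hm y ψ e]
  simp_rw [mul_div_assoc]
  refine blimsup_thickening_mul_ae_eq volume _ _ hM (fun i => ψ (e i) / l1 (e i)) ?_
  have hl : Tendsto (fun i => (l1 (e i))⁻¹) atTop (𝓝 0) := by
    rw [← Nat.cofinite_eq_atTop]
    exact (tendsto_l1.comp e.injective.tendsto_cofinite).inv_tendsto_atTop
  have hl0 : ∀ q : Fin n → ℤ, 0 ≤ l1 q := fun q => Finset.sum_nonneg fun _ _ => abs_nonneg _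
  refine squeeze_zero (fun i => div_nonneg (h0 _) (hl0 _)) (fun i => ?_) hl
  rw [div_eq_mul_inv]
  exact mul_le_of_le_one_left (inv_nonneg.2 (hl0 _)) (h1 _)

lemma mem_limsupSet_add_int {n m : ℕ} {y : Fin m → ℝ} {ψ : (Fin n → ℤ) → ℝ}
    {x : Fin n → Fin m → ℝ} (hx : x ∈ limsupSet y ψ) (k : Fin n → Fin m → ℤ) :
    (fun i j => x i j + k i j) ∈ limsupSet y ψ := by
  refine Set.Infinite.mono ?_ hx
  rintro q ⟨hq, p, hp⟩
  refine ⟨hq, fun j => p j + ∑ i, q i * k i j, fun j => ?_⟩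
  convert! hp j using 2
  push_cast
  simp_rw [mul_add, Finset.sum_add_distrib]
  ring

/-- With `y = a / b` we have `(b + 1) y = y + a`, so if `q x` is close to `p + y` then
`(b + 1) q x` is close to `(b + 1) p + a + y`, with an error `b + 1` times as large. -/
lemma mem_limsupSet_mul {n m : ℕ} {a : Fin m → ℤ} {b : ℕ} (hb : 1 ≤ b) {ψ : (Fin n → ℤ) → ℝ}
    {x : Fin n → Fin m → ℝ} (hx : x ∈ limsupSet (fun j => (a j : ℝ) / b) ψ) :
    (fun i j => ((b + 1 : ℕ) : ℝ) * x i j) ∈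
      limsupSet (fun j => (a j : ℝ) / b) (fun q => ((b + 1 : ℕ) : ℝ) * ψ q) := by
  refine Set.Infinite.mono ?_ hx
  rintro q ⟨hq, p, hp⟩
  refine ⟨hq, fun j => (b + 1) * p j + a j, fun j => ?_⟩
  have hb' : (b : ℝ) ≠ 0 := by positivity
  have : (∑ i, (q i : ℝ) * (((b + 1 : ℕ) : ℝ) * x i j)) - (((b + 1) * p j + a j : ℤ) : ℝ)
      - (a j : ℝ) / b = ((b + 1 : ℕ) : ℝ) * ((∑ i, (q i : ℝ) * x i j) - p j - (a j : ℝ) / b) := by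
    simp_rw [mul_left_comm _ ((b + 1 : ℕ) : ℝ)]
    rw [← Finset.mul_sum]
    push_cast
    field_simp
    ring
  rw [this, abs_mul, abs_of_pos (by positivity)]
  exact mul_lt_mul_of_pos_left (hp j) (by positivity)

/-- The covering map from real `n × m` matrices to the torus `(ℝ/ℤ)^(n m)`. -/
def proj (n m : ℕ) (x : Fin n → Fin m → ℝ) : Fin n → Fin m → UnitAddCircle :=
  fun i j => (x i j : UnitAddCircle)

lemma proj_eq_iff {n m : ℕ} {x x' : Fin n → Fin m → ℝ} (h : proj n m x = proj n m x') :
    ∃ k : Fin n → Fin m → ℤ, x' = fun i j => x i j + k i j := by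
  have : ∀ i j, ∃ k : ℤ, x' i j = x i j + k := by
    intro i j
    have h1 : (x i j : UnitAddCircle) = (x' i j : UnitAddCircle) := congrFun (congrFun h i) j
    rw [eq_comm, ← sub_eq_zero, ← AddCircle.coe_sub, AddCircle.coe_eq_zero_iff] at h1
    obtain ⟨k, hk⟩ := h1
    exact ⟨k, by rw [zsmul_one] at hk; linarith⟩
  choose k hk using this
  exact ⟨k, by ext i j; exact hk i j⟩

instance : IsProbabilityMeasure (volume : Measure UnitAddCircle) := ⟨UnitAddCircle.measure_univ⟩

lemma measurePreserving_proj (n m : ℕ) :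
    MeasurePreserving (proj n m)
      (volume.restrict {x | ∀ i j, x i j ∈ Set.Ico (0 : ℝ) 1}) volume := by
  have h1 : MeasurePreserving ((↑) : ℝ → UnitAddCircle) (volume.restrict (Ico (0 : ℝ) 1)) volume := by
    have := UnitAddCircle.measurePreserving_mk 0
    rw [zero_add] at this
    rwa [Measure.restrict_congr_set Ico_ae_eq_Ioc]
  have h2 := measurePreserving_pi (fun _ : Fin n => Measure.pi fun _ : Fin m =>
      volume.restrict (Ico (0 : ℝ) 1)) (fun _ : Fin n => Measure.pi fun _ : Fin m =>
      (volume : Measure UnitAddCircle)) fun _ => measurePreserving_pi _ _ fun _ => h1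
  have h3 : (Measure.pi fun _ : Fin n => Measure.pi fun _ : Fin m =>
      (volume : Measure ℝ).restrict (Ico (0 : ℝ) 1)) =
      volume.restrict {x : Fin n → Fin m → ℝ | ∀ i j, x i j ∈ Set.Ico (0 : ℝ) 1} := by
    simp_rw [← Measure.restrict_pi_pi]
    congr 1
    ext x
    simp
  rw [h3] at h2
  exact h2

/-- Multiplication by `N ≥ 2` on a torus is ergodic: the points killed by some power of `N` are
dense, since `⌊N ^ k x⌋ / N ^ k` tends to `x`. -/
lemma ergodic_nsmul_torus (n m N : ℕ) (hN : 2 ≤ N) :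
    Ergodic (fun t : Fin n → Fin m → UnitAddCircle => N • t) volume := by
  have hN0 : (N : ℝ) ≠ 0 := by positivity
  let f : (Fin n → Fin m → UnitAddCircle) →+ (Fin n → Fin m → UnitAddCircle) :=
    nsmulAddMonoidHom N
  have hsurj1 : Function.Surjective (proj n m) := fun t => by
    choose x hx using fun i j => QuotientAddGroup.mk_surjective (t i j)
    exact ⟨x, by ext i j; exact hx i j⟩
  have hiter : ∀ k t, f^[k] t = N ^ k • t := by
    intro k t
    induction k with
    | zero => simp
    | succ k ih =>
      rw [Function.iterate_succ_apply', ih, pow_succ', mul_smul]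
      rfl
  have : (volume : Measure (Fin n → Fin m → UnitAddCircle)).IsAddHaarMeasure :=
    Measure.pi.isAddHaarMeasure _
  refine f.ergodic_of_dense_iUnion_preimage_zero (μ := volume) ?_ (continuous_const_smul N) ?_
  · intro t
    obtain ⟨x, rfl⟩ := hsurj1 t
    have hcont : Continuous (proj n m) :=
      continuous_pi fun i => continuous_pi fun j =>
        (AddCircle.continuous_mk' 1).comp ((continuous_apply j).comp (continuous_apply i))
    have hlim : Tendsto (fun k : ℕ => fun i j => (⌊(N : ℝ) ^ k * x i j⌋ : ℝ) / (N : ℝ) ^ k)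
        atTop (𝓝 x) := by
      refine tendsto_pi_nhds.2 fun i => tendsto_pi_nhds.2 fun j => ?_
      have hp : Tendsto (fun k : ℕ => (N : ℝ) ^ k) atTop atTop :=
        tendsto_pow_atTop_atTop_of_one_lt (by exact_mod_cast hN)
      rw [tendsto_iff_dist_tendsto_zero]
      refine squeeze_zero (fun _ => dist_nonneg) (fun k => ?_) hp.inv_tendsto_atTop
      have hk : (0 : ℝ) < (N : ℝ) ^ k := by positivity
      rw [Real.dist_eq, Pi.inv_apply, inv_eq_one_div, div_sub' hk.ne', abs_div, abs_of_pos hk]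
      gcongr
      rw [abs_sub_comm, abs_of_nonneg (sub_nonneg.2 (Int.floor_le _))]
      linarith [Int.lt_floor_add_one ((N : ℝ) ^ k * x i j)]
    refine mem_closure_of_tendsto ((hcont.tendsto x).comp hlim) (Eventually.of_forall fun k => ?_)
    refine mem_iUnion.2 ⟨k, ?_⟩
    rw [mem_preimage, hiter, Set.mem_zero]
    ext i j
    have hk : ((N ^ k : ℕ) : ℝ) ≠ 0 := by positivity
    change N ^ k • (((⌊(N : ℝ) ^ k * x i j⌋ : ℝ) / (N : ℝ) ^ k : ℝ) : UnitAddCircle) = 0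
    rw [← AddCircle.coe_nsmul, AddCircle.coe_eq_zero_iff]
    refine ⟨⌊(N : ℝ) ^ k * x i j⌋, ?_⟩
    rw [nsmul_eq_mul, zsmul_one, ← Nat.cast_pow, mul_div_cancel₀ _ hk]
  · intro t
    obtain ⟨x, rfl⟩ := hsurj1 t
    refine ⟨proj n m fun i j => x i j / N, ?_⟩
    ext i j
    change N • ((x i j / N : ℝ) : UnitAddCircle) = (x i j : UnitAddCircle)
    rw [← AddCircle.coe_nsmul, nsmul_eq_mul, mul_div_cancel₀ _ hN0]

/-- A measurable `ℤ`-periodic set of matrices that is mapped into itself by multiplication by some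
`N ≥ 2` has measure zero or one in the unit cube. -/
lemma zero_one_of_invariant {n m N : ℕ} (hN : 2 ≤ N) {A : Set (Fin n → Fin m → ℝ)}
    (hA : MeasurableSet A)
    (hper : ∀ x ∈ A, ∀ k : Fin n → Fin m → ℤ, (fun i j => x i j + k i j) ∈ A)
    (hinv : ∀ x ∈ A, (fun i j => (N : ℝ) * x i j) ∈ A) :
    volume ({x | ∀ i j, x i j ∈ Set.Ico (0 : ℝ) 1} ∩ A) = 0 ∨
      volume ({x | ∀ i j, x i j ∈ Set.Ico (0 : ℝ) 1} ∩ A) = 1 := by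
  -- The section of `proj` with values in the unit cube transports `A` to a subset `B` of the torus.
  let sec : (Fin n → Fin m → UnitAddCircle) → (Fin n → Fin m → ℝ) :=
    fun t i j => (AddCircle.measurableEquivIco 1 0 (t i j) : ℝ)
  have hsec : Measurable sec := by
    refine measurable_pi_lambda _ fun i => measurable_pi_lambda _ fun j => ?_
    exact measurable_subtype_coe.comp ((AddCircle.measurableEquivIco 1 0).measurable.comp
      ((measurable_pi_apply j).comp (measurable_pi_apply i)))
  have hproj : ∀ t, proj n m (sec t) = t := fun t => by
    ext i j
    exact (AddCircle.measurableEquivIco 1 0).symm_apply_apply (t i j)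
  set B := sec ⁻¹' A with hBdef
  have hB : MeasurableSet B := hsec hA
  have hmem : ∀ {x x'}, proj n m x = proj n m x' → x ∈ A → x' ∈ A := by
    intro x x' h hx
    obtain ⟨k, rfl⟩ := proj_eq_iff h
    exact hper x hx k
  have hpre : proj n m ⁻¹' B = A := by
    ext x
    exact ⟨hmem (hproj _), hmem (hproj _).symm⟩
  have hsub : B ⊆ (fun t => N • t) ⁻¹' B := by
    intro t ht
    refine hmem ?_ (hinv _ ht)
    rw [hproj]
    ext i j
    conv_rhs => rw [← hproj t]
    change (((N : ℝ) * sec t i j : ℝ) : UnitAddCircle) = N • ((sec t i j : ℝ) : UnitAddCircle)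
    rw [← AddCircle.coe_nsmul, nsmul_eq_mul]
  have hvol : volume ({x | ∀ i j, x i j ∈ Set.Ico (0 : ℝ) 1} ∩ A) = volume B := by
    rw [← (measurePreserving_proj n m).measure_preimage hB.nullMeasurableSet, hpre,
      Measure.restrict_apply hA, inter_comm]
  rw [hvol]
  rcases (ergodic_nsmul_torus n m N hN).ae_empty_or_univ_of_ae_le_preimage
    hB.nullMeasurableSet hsub.eventuallyLE with h | h
  · left; rw [measure_congr h, measure_empty]
  · right; rw [measure_congr h, measure_univ]

/-- The theorem's condition on pairs `(q, p)` is a condition on `q` alone, and `Ψ` may be truncated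
at `1`: each `q` admits finitely many `p`, and for `Ψ q > 1` both `Ψ q` and `1` exceed the distance
`1 / 2` that rounding always achieves. -/
lemma infinite_iff_mem_limsupSet {n m : ℕ} (y : Fin m → ℝ) (Ψ : (Fin n → ℤ) → ℝ)
    (x : Fin n → Fin m → ℝ) :
    {qp : (Fin n → ℤ) × (Fin m → ℤ) | qp.1 ≠ 0 ∧
      ∀ j, |(∑ i, (qp.1 i : ℝ) * x i j) - qp.2 j - y j| < Ψ qp.1}.Infinite ↔
      x ∈ limsupSet y (fun q => min (Ψ q) 1) := by
  set R := {qp : (Fin n → ℤ) × (Fin m → ℤ) | qp.1 ≠ 0 ∧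
      ∀ j, |(∑ i, (qp.1 i : ℝ) * x i j) - qp.2 j - y j| < Ψ qp.1} with hR
  have himg : Prod.fst '' R = {q | q ≠ 0 ∧ x ∈ approxSet y (fun q => min (Ψ q) 1) q} := by
    ext q
    constructor
    · rintro ⟨⟨q, p⟩, ⟨hq, hp⟩, rfl⟩
      refine ⟨hq, ?_⟩
      rcases le_or_gt (Ψ q) 1 with h | h
      · exact ⟨p, fun j => lt_min (hp j) ((hp j).trans_le h)⟩
      · refine ⟨fun j => round ((∑ i, (q i : ℝ) * x i j) - y j), fun j => ?_⟩
        change _ < min (Ψ q) 1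
        rw [min_eq_right h.le, sub_right_comm]
        exact (abs_sub_round _).trans_lt (by norm_num)
    · rintro ⟨hq, p, hp⟩
      exact ⟨(q, p), ⟨hq, fun j => (hp j).trans_le (min_le_left _ _)⟩, rfl⟩
  have hfib : ∀ q, (R ∩ Prod.fst ⁻¹' {q}).Finite := by
    intro q
    refine ((Set.finite_singleton q).prod (Set.Finite.pi fun j : Fin m =>
      Set.finite_Icc ⌊(∑ i, (q i : ℝ) * x i j) - y j - Ψ q⌋
        ⌈(∑ i, (q i : ℝ) * x i j) - y j + Ψ q⌉)).subset ?_
    rintro ⟨q', p⟩ ⟨⟨-, hp⟩, rfl : q' = q⟩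
    refine ⟨rfl, fun j _ => ?_⟩
    have := abs_lt.1 (hp j)
    constructor
    · refine Int.cast_le (R := ℝ).1 ((Int.floor_le _).trans ?_)
      dsimp only at this ⊢
      linarith
    · refine Int.cast_le (R := ℝ).1 (le_trans ?_ (Int.le_ceil _))
      dsimp only at this ⊢
      linarith
  rw [limsupSet, mem_ofPred, ← himg]
  refine not_congr ⟨fun h => h.image _, fun h => ?_⟩
  exact Set.Finite.of_finite_fibers Prod.fst h fun q _ => hfib q

end RationalZeroOne

open RationalZeroOne Filter in
theorem stmt15 (n m : ℕ) (hn : 1 ≤ n) (hm : 1 ≤ m)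
    (Ψ : (Fin n → ℤ) → ℝ) (hΨ : ∀ q, 0 ≤ Ψ q)
    (a : Fin m → ℤ) (b : ℕ) (hb : 1 ≤ b)
    (hab : GCDMonoid.gcd (Finset.univ.gcd a) ((b : ℤ)) = 1) :
    volume {x : Fin n → Fin m → ℝ | (∀ i j, x i j ∈ Set.Ico (0:ℝ) 1) ∧
        {qp : (Fin n → ℤ) × (Fin m → ℤ) | qp.1 ≠ 0 ∧
          ∀ j, |(∑ i, (qp.1 i : ℝ) * x i j) - qp.2 j - (a j : ℝ) / b| < Ψ qp.1}.Infinite} = 0 ∨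
    volume {x : Fin n → Fin m → ℝ | (∀ i j, x i j ∈ Set.Ico (0:ℝ) 1) ∧
        {qp : (Fin n → ℤ) × (Fin m → ℤ) | qp.1 ≠ 0 ∧
          ∀ j, |(∑ i, (qp.1 i : ℝ) * x i j) - qp.2 j - (a j : ℝ) / b| < Ψ qp.1}.Infinite} = 1 := by
  simp_rw [infinite_iff_mem_limsupSet (fun j => (a j : ℝ) / b) Ψ]
  rw [Set.ofPred_and, Set.ofPred_mem_eq]
  have : Nonempty (Fin n) := ⟨⟨0, hn⟩⟩
  obtain ⟨_⟩ := nonempty_denumerable (Fin n → ℤ)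
  let e : ℕ ≃ (Fin n → ℤ) := (Denumerable.eqv (Fin n → ℤ)).symm
  set y : Fin m → ℝ := fun j => (a j : ℝ) / b with hy
  set ψ : (Fin n → ℤ) → ℝ := fun q => min (Ψ q) 1 with hψ
  set N : ℕ := b + 1 with hN
  have hNpos : (0 : ℝ) < N := by positivity
  let A : Set (Fin n → Fin m → ℝ) := ⋃ k : ℕ, limsupSet y fun q => (N : ℝ) ^ k * ψ q
  have hAe : A =ᵐ[volume] limsupSet y ψ := by
    have h := Filter.EventuallyEq.countable_iUnion fun k : ℕ =>
      limsupSet_mul_ae_eq hm y ψ (fun q => le_min (hΨ q) zero_le_one) (fun q => min_le_right _ _) e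
        (pow_pos hNpos k)
    rwa [iUnion_const] at h
  have h := zero_one_of_invariant (N := N) (A := A) (by omega)
    (MeasurableSet.iUnion fun k => measurableSet_limsupSet hm y _ e)
    (fun x hx k => by
      obtain ⟨l, hl⟩ := mem_iUnion.1 hx
      exact mem_iUnion.2 ⟨l, mem_limsupSet_add_int hl k⟩)
    (fun x hx => by
      obtain ⟨l, hl⟩ := mem_iUnion.1 hx
      refine mem_iUnion.2 ⟨l + 1, ?_⟩
      simp_rw [pow_succ', mul_assoc]
      exact mem_limsupSet_mul hb hl)
  rwa [measure_congr ((EventuallyEq.refl _ _).inter hAe)] at h
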